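/- arXiv:2409.05744 — 2 statements merged into one kernel-verified Lean document; each statement's English description precedes it below -/
import Mathlib

section
/- Let X be a uniformly convex real Banach space, let r be a Helly sequence for X, let k ≥ 1, and let 𝔽_1, …, 𝔽_k be finite nonempty families of convex subsets of X. If every rainbow k-tuple (K_1, …, K_k) ∈ 𝔽_1 × ⋯ × 𝔽_k is such that ⋂_{i=1}^{k} K_i contains a point of the closed unit ball of X, then there exist x ∈ X and i ∈ {1,…,k} such that every member K of 𝔽_i satisfies dist(x, K) ≤ r_k. -/
open scoped Classical

noncomputable section

/-- `y` is quasi-orthogonal to `x`: some nonzero continuous linear functional attains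
its norm on `x` and vanishes on `y`. -/
def QuasiOrth {X : Type*} [NormedAddCommGroup X] [NormedSpace ℝ X] (y x : X) : Prop :=
  ∃ f : X →L[ℝ] ℝ, f ≠ 0 ∧ f x = ‖f‖ * ‖x‖ ∧ f y = 0

/-- `ζ_X(ε) = inf {‖x + ε y‖ : ‖x‖ = ‖y‖ = 1, y ⌐ x}`. -/
def zetaConv (X : Type*) [NormedAddCommGroup X] [NormedSpace ℝ X] (ε : ℝ) : ℝ :=
  sInf {t : ℝ | ∃ x y : X, ‖x‖ = 1 ∧ ‖y‖ = 1 ∧ QuasiOrth y x ∧ t = ‖x + ε • y‖}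

/-- `ζ⁺_X(ε) = sup {‖x + ε y‖ : ‖x‖ = ‖y‖ = 1, y ⌐ x}`. -/
def zetaSmooth (X : Type*) [NormedAddCommGroup X] [NormedSpace ℝ X] (ε : ℝ) : ℝ :=
  sSup {t : ℝ | ∃ x y : X, ‖x‖ = 1 ∧ ‖y‖ = 1 ∧ QuasiOrth y x ∧ t = ‖x + ε • y‖}

/-- The modulus of convexity `δ_X(ε)`. -/
def modConv (X : Type*) [NormedAddCommGroup X] [NormedSpace ℝ X] (ε : ℝ) : ℝ :=
  sInf {t : ℝ | ∃ x y : X, ‖x‖ ≤ 1 ∧ ‖y‖ ≤ 1 ∧ ε ≤ ‖x - y‖ ∧ t = 1 - ‖x + y‖ / 2}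

/-- The modulus of smoothness `ρ_X(τ)`. -/
def modSmooth (X : Type*) [NormedAddCommGroup X] [NormedSpace ℝ X] (τ : ℝ) : ℝ :=
  sSup {t : ℝ | ∃ x y : X, ‖x‖ = 1 ∧ ‖y‖ = τ ∧ t = (‖x + y‖ + ‖x - y‖) / 2 - 1}

/-- `X` is uniformly convex: the modulus of convexity is positive on `(0, 2]`. -/
def UnifConvex (X : Type*) [NormedAddCommGroup X] [NormedSpace ℝ X] : Prop :=
  ∀ ε ∈ Set.Ioc (0 : ℝ) 2, 0 < modConv X ε

/-- `X` is uniformly smooth: `ρ_X(τ)/τ → 0` as `τ → 0⁺`. -/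
def UnifSmooth (X : Type*) [NormedAddCommGroup X] [NormedSpace ℝ X] : Prop :=
  Filter.Tendsto (fun τ => modSmooth X τ / τ) (nhdsWithin 0 (Set.Ioi 0)) (nhds 0)

/-- A Helly sequence for `X`: `r : {1,2,…} → (0,1]` with `r 1 = 1` and
`r (j+1) * ζ_X (r (j+1)) = r j` for all `j ≥ 1`. -/
def IsHellySeq (X : Type*) [NormedAddCommGroup X] [NormedSpace ℝ X] (r : ℕ → ℝ) : Prop :=
  (∀ j : ℕ, 1 ≤ j → r j ∈ Set.Ioc (0 : ℝ) 1) ∧ r 1 = 1 ∧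
    ∀ j : ℕ, 1 ≤ j → r (j + 1) * zetaConv X (r (j + 1)) = r j

end

/-!
Replacing each set by the convex hull of the chosen rainbow points it contains, we may take all
the sets to be compact. Suppose that no point is within `r k` of a whole family. Pick one set from
each family greedily: the first at distance more than `r k` from the origin, and each later one at
distance more than `r k` from the point `p` of least norm of the intersection `S` of the sets picked
so far. A hyperplane supports `S` at `p`, so moving from `p` inside `S` by at least `t * ‖p‖`
multiplies the norm by at least `zetaConv X t`. The Helly recursion turns this into
`r k / r j < ‖c‖` for every point `c` of the intersection of the first `j` sets. At `j = k` this
intersection misses the unit ball, which is a contradiction.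
-/

section QuasiOrthogonality

variable {X : Type*} [NormedAddCommGroup X] [NormedSpace ℝ X] {f : X →L[ℝ] ℝ} {x y z : X}

/-- `f` is a nonzero functional attaining its norm in the direction of `x`. The vectors
quasi-orthogonal to `x` are those on which some such `f` vanishes; naming the functional makes
it possible to speak also of the half-space `0 ≤ f z`. -/
def IsNormingAt (f : X →L[ℝ] ℝ) (x : X) : Prop :=
  f ≠ 0 ∧ f x = ‖f‖ * ‖x‖

lemma IsNormingAt.quasiOrth (hf : IsNormingAt f x) (hy : f y = 0) : QuasiOrth y x :=
  ⟨f, hf.1, hf.2, hy⟩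

lemma IsNormingAt.apply_pos (hf : IsNormingAt f x) (hx : x ≠ 0) : 0 < f x :=
  hf.2 ▸ mul_pos (norm_pos_iff.2 hf.1) (norm_pos_iff.2 hx)

lemma IsNormingAt.norm_le_norm_add (hf : IsNormingAt f x) (hz : 0 ≤ f z) : ‖x‖ ≤ ‖x + z‖ := by
  refine le_of_mul_le_mul_left ?_ (norm_pos_iff.2 hf.1)
  calc ‖f‖ * ‖x‖ = f x := hf.2.symm
    _ ≤ f (x + z) := by rw [map_add]; exact le_add_of_nonneg_right hz
    _ ≤ ‖f‖ * ‖x + z‖ := (le_abs_self _).trans (f.le_opNorm _)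

lemma QuasiOrth.smul_smul (h : QuasiOrth y x) (b : ℝ) {a : ℝ} (ha : 0 ≤ a) :
    QuasiOrth (b • y) (a • x) := by
  obtain ⟨f, hf, hfx, hfy⟩ := h
  refine ⟨f, hf, ?_, by rw [map_smul, hfy, smul_zero]⟩
  rw [map_smul, hfx, norm_smul, Real.norm_of_nonneg ha, smul_eq_mul]
  ring

lemma QuasiOrth.norm_le_norm_add_smul (h : QuasiOrth y x) (t : ℝ) : ‖x‖ ≤ ‖x + t • y‖ := by
  obtain ⟨f, hf, hfx, hfy⟩ := h
  exact IsNormingAt.norm_le_norm_add ⟨hf, hfx⟩ (by rw [map_smul, hfy, smul_zero])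

lemma QuasiOrth.monotoneOn_norm_add_smul (h : QuasiOrth y x) :
    MonotoneOn (fun t : ℝ => ‖x + t • y‖) (Set.Ici 0) := by
  intro s hs t _ hst
  have hconv : Convex ℝ {a : ℝ | ‖x + a • y‖ ≤ ‖x + t • y‖} := by
    simpa [Function.comp_def, AffineMap.lineMap_apply, add_comm] using
      (convexOn_univ_norm.comp_affineMap (AffineMap.lineMap x (x + y))).convex_le ‖x + t • y‖
  have hzero : (0 : ℝ) ∈ {a : ℝ | ‖x + a • y‖ ≤ ‖x + t • y‖} := by
    simpa using h.norm_le_norm_add_smul t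
  exact hconv.ordConnected.out hzero (le_refl ‖x + t • y‖) ⟨hs, hst⟩

lemma QuasiOrth.norm_add_smul_le_mul (h : QuasiOrth y x) {a s t : ℝ} (ha : 0 ≤ a) (hs : 0 ≤ s)
    (ht : 0 ≤ t) (hst : s * ‖y‖ ≤ ‖a • (x + t • y) + t • y‖) :
    ‖x + s • y‖ ≤ (1 + a) * ‖x + t • y‖ := by
  rcases le_total s t with hle | hle
  · calc ‖x + s • y‖ ≤ ‖x + t • y‖ := h.monotoneOn_norm_add_smul hs ht hle
      _ ≤ (1 + a) * ‖x + t • y‖ := le_mul_of_one_le_left (norm_nonneg _) (by linarith)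
  · have hsum : s * ‖y‖ ≤ a * ‖x + t • y‖ + t * ‖y‖ :=
      hst.trans (norm_add_le_of_le (norm_smul_of_nonneg ha _).le (norm_smul_of_nonneg ht _).le)
    calc ‖x + s • y‖ = ‖(x + t • y) + (s - t) • y‖ := by congr 1; module
      _ ≤ ‖x + t • y‖ + (s - t) * ‖y‖ :=
        norm_add_le_of_le le_rfl (norm_smul_of_nonneg (sub_nonneg.2 hle) _).le
      _ ≤ (1 + a) * ‖x + t • y‖ := by linarith

lemma exists_isNormingAt_of_isMinOn_norm {C : Set X} (hC : Convex ℝ C) {p : X} (hp : p ∈ C)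
    (hp₀ : p ≠ 0) (hmin : IsMinOn norm C p) :
    ∃ f : X →L[ℝ] ℝ, IsNormingAt f p ∧ ∀ c ∈ C, f p ≤ f c := by
  have hp_pos : 0 < ‖p‖ := norm_pos_iff.2 hp₀
  have hdisj : Disjoint (Metric.ball 0 ‖p‖) C := Set.disjoint_left.2 fun c hc hcC =>
    (mem_ball_zero_iff.1 hc).not_ge (hmin hcC)
  obtain ⟨f, u, hball, hCu⟩ :=
    geometric_hahn_banach_open (convex_ball (0 : X) ‖p‖) Metric.isOpen_ball hC hdisj
  have hu : 0 < u := by simpa using hball 0 (Metric.mem_ball_self hp_pos)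
  have hf : f ≠ 0 := by
    rintro rfl
    exact (hCu p hp).not_gt hu
  have habs : ∀ v ∈ Metric.ball (0 : X) ‖p‖, ‖f v‖ ≤ u := fun v hv =>
    abs_le'.2 ⟨(hball v hv).le, by simpa using (hball (-v) (by simpa using hv)).le⟩
  have habs_closed : ∀ v ∈ Metric.closedBall (0 : X) ‖p‖, ‖f v‖ ≤ u := by
    rw [← closure_ball (0 : X) hp_pos.ne']
    exact fun v hv => le_on_closure habs f.continuous.norm.continuousOn continuousOn_const hv
  have hnorm : ‖f‖ * ‖p‖ ≤ u :=
    (le_div_iff₀ hp_pos).1 (ContinuousLinearMap.opNorm_bound_of_ball_bound hp_pos u f habs_closed)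
  have hfp : f p ≤ ‖f‖ * ‖p‖ := (le_abs_self _).trans (f.le_opNorm _)
  exact ⟨f, ⟨hf, hfp.antisymm (hnorm.trans (hCu p hp))⟩,
    fun c hc => (hfp.trans hnorm).trans (hCu c hc)⟩

end QuasiOrthogonality

section ConvexityModulus

variable {X : Type*} [NormedAddCommGroup X] [NormedSpace ℝ X] {f : X →L[ℝ] ℝ} {x y z : X}

lemma zetaConv_le (s : ℝ) (hx : ‖x‖ = 1) (hy : ‖y‖ = 1) (h : QuasiOrth y x) :
    zetaConv X s ≤ ‖x + s • y‖ :=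
  csInf_le ⟨0, by rintro _ ⟨x, y, _, _, _, rfl⟩; positivity⟩ ⟨x, y, hx, hy, h, rfl⟩

lemma zetaConv_mul_norm_le (s : ℝ) (hx : x ≠ 0) (hxy : ‖y‖ = ‖x‖) (h : QuasiOrth y x) :
    zetaConv X s * ‖x‖ ≤ ‖x + s • y‖ := by
  have hx_pos : 0 < ‖x‖ := norm_pos_iff.2 hx
  have hinv : 0 ≤ ‖x‖⁻¹ := by positivity
  have hunit : ‖‖x‖⁻¹ • x‖ = 1 := norm_smul_inv_norm hx
  have hunit' : ‖‖x‖⁻¹ • y‖ = 1 := by rw [norm_smul, hxy, ← norm_smul, hunit]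
  rw [← le_div_iff₀ hx_pos, div_eq_inv_mul, ← norm_smul_of_nonneg hinv]
  calc zetaConv X s ≤ ‖‖x‖⁻¹ • x + s • ‖x‖⁻¹ • y‖ :=
        zetaConv_le s hunit hunit' (h.smul_smul _ hinv)
    _ = ‖‖x‖⁻¹ • (x + s • y)‖ := by congr 1; module

lemma zetaConv_le_one_add {s : ℝ} (hs : 0 ≤ s) : zetaConv X s ≤ 1 + s := by
  by_cases h : ∃ x y : X, ‖x‖ = 1 ∧ ‖y‖ = 1 ∧ QuasiOrth y x
  · obtain ⟨x, y, hx, hy, hxy⟩ := h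
    refine (zetaConv_le s hx hy hxy).trans (norm_add_le_of_le hx.le ?_)
    rw [norm_smul_of_nonneg hs, hy, mul_one]
  · -- On a space without quasi-orthogonal unit vectors, `zetaConv` is `sInf ∅ = 0`.
    push Not at h
    refine (Real.sInf_nonpos ?_).trans (by positivity)
    rintro _ ⟨x, y, hx, hy, hxy, _⟩
    exact absurd hxy (h x y hx hy)

-- The ray through `x + z` meets the hyperplane `f = f x` at `x + w`.
lemma exists_eq_smul_add_add_of_apply_pos (hx : 0 < f x) (hz : 0 ≤ f z) :
    ∃ (a : ℝ) (w : X), 0 ≤ a ∧ f w = 0 ∧ z = a • (x + w) + w := by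
  obtain ⟨a, ha, hfz⟩ : ∃ a, 0 ≤ a ∧ f z = a * f x :=
    ⟨f z / f x, by positivity, (div_mul_cancel₀ _ hx.ne').symm⟩
  refine ⟨a, (1 + a)⁻¹ • (z - a • x), ha, by simp [hfz], ?_⟩
  match_scalars <;> field

lemma IsNormingAt.zetaConv_mul_norm_le_norm_add (hf : IsNormingAt f x) (hx : x ≠ 0)
    (hz : 0 ≤ f z) {s : ℝ} (hs : 0 ≤ s) (hsz : s * ‖x‖ ≤ ‖z‖) :
    zetaConv X s * ‖x‖ ≤ ‖x + z‖ := by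
  obtain ⟨a, w, ha, hfw, rfl⟩ := exists_eq_smul_add_add_of_apply_pos (hf.apply_pos hx) hz
  have hx_pos : 0 < ‖x‖ := norm_pos_iff.2 hx
  have hnorm : ‖x + (a • (x + w) + w)‖ = (1 + a) * ‖x + w‖ := by
    rw [← norm_smul_of_nonneg (by positivity)]
    congr 1
    module
  rw [hnorm]
  rcases eq_or_ne w 0 with rfl | hw
  · have hsa : s ≤ a := by simpa [norm_smul_of_nonneg ha, hx_pos] using hsz
    rw [add_zero]
    gcongr
    exact (zetaConv_le_one_add hs).trans (by gcongr)
  · have hw_pos : 0 < ‖w‖ := norm_pos_iff.2 hw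
    obtain ⟨t, y, ht, hy, rfl⟩ : ∃ (t : ℝ) (y : X), 0 < t ∧ ‖y‖ = ‖x‖ ∧ w = t • y := by
      refine ⟨‖w‖ / ‖x‖, (‖x‖ / ‖w‖) • w, by positivity, ?_, ?_⟩
      · rw [norm_smul_of_nonneg (by positivity), div_mul_cancel₀ _ hw_pos.ne']
      · rw [smul_smul, div_mul_div_cancel₀ hx_pos.ne', div_self hw_pos.ne', one_smul]
    have hyx : QuasiOrth y x := hf.quasiOrth (by simpa [ht.ne'] using hfw)
    calc zetaConv X s * ‖x‖ ≤ ‖x + s • y‖ := zetaConv_mul_norm_le s hx hy hyx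
      _ ≤ (1 + a) * ‖x + t • y‖ := hyx.norm_add_smul_le_mul ha hs ht.le (hy.symm ▸ hsz)

lemma zetaConv_mul_norm_le_norm_of_isMinOn {C : Set X} (hC : Convex ℝ C) {p c : X} (hp : p ∈ C)
    (hmin : IsMinOn norm C p) (hc : c ∈ C) {s : ℝ} (hs : 0 ≤ s) (hsc : s * ‖p‖ ≤ ‖c - p‖) :
    zetaConv X s * ‖p‖ ≤ ‖c‖ := by
  rcases eq_or_ne p 0 with rfl | hp₀
  · simp
  obtain ⟨f, hf, hfC⟩ := exists_isNormingAt_of_isMinOn_norm hC hp hp₀ hmin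
  simpa using hf.zetaConv_mul_norm_le_norm_add hp₀
    (by simpa using hfC c hc : 0 ≤ f (c - p)) hs hsc

lemma lt_norm_mul_of_isMinOn {C : Set X} (hC : Convex ℝ C) {p c : X} (hp : p ∈ C)
    (hmin : IsMinOn norm C p) (hc : c ∈ C) {R t : ℝ} (ht : 0 ≤ t)
    (hpR : R < ‖p‖ * (t * zetaConv X t)) (hcR : R < ‖c - p‖) : R < ‖c‖ * t := by
  rcases lt_or_ge R (‖p‖ * t) with hlt | hge
  · exact hlt.trans_le (mul_le_mul_of_nonneg_right (hmin hc) ht)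
  · have hnorm : zetaConv X t * ‖p‖ ≤ ‖c‖ :=
      zetaConv_mul_norm_le_norm_of_isMinOn hC hp hmin hc ht (by linarith)
    calc R < zetaConv X t * ‖p‖ * t := by linarith
      _ ≤ ‖c‖ * t := mul_le_mul_of_nonneg_right hnorm ht

end ConvexityModulus

section RainbowIntersections

variable {X : Type*} [NormedAddCommGroup X] [NormedSpace ℝ X]

lemma exists_rainbow_forall_lt_norm_mul {r : ℕ → ℝ} (hr : IsHellySeq X r) {R : ℝ} {n : ℕ}
    {ι : Fin (n + 1) → Type*} (K : ∀ i, ι i → Set X) (hconv : ∀ i a, Convex ℝ (K i a))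
    (hcomp : ∀ i a, IsCompact (K i a)) (hinter : ∀ T : ∀ i, ι i, (⋂ i, K i (T i)).Nonempty)
    (hfar : ∀ x i, ∃ a, R < Metric.infDist x (K i a)) :
    ∃ T : ∀ i, ι i, ∀ c ∈ ⋂ i, K i (T i), R < ‖c‖ * r (n + 1) := by
  induction n with
  | zero =>
    choose T hT using hfar 0
    refine ⟨T, fun c hc => (hT 0).trans_le ?_⟩
    simpa [hr.2.1] using Metric.infDist_le_dist_of_mem (x := 0) (Set.mem_iInter.1 hc 0)
  | succ n ih =>
    obtain ⟨b, -⟩ := hfar 0 (Fin.last (n + 1))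
    have hinter_init (T : ∀ i : Fin (n + 1), ι i.castSucc) :
        (⋂ i, K i.castSucc (T i)).Nonempty := by
      refine (hinter (Fin.snoc T b)).mono fun c hc => Set.mem_iInter.2 fun i => ?_
      simpa using Set.mem_iInter.1 hc i.castSucc
    obtain ⟨T, hT⟩ := ih (fun i => K i.castSucc) (fun i => hconv i.castSucc)
      (fun i => hcomp i.castSucc) hinter_init (fun x i => hfar x i.castSucc)
    let S : Set X := ⋂ i : Fin (n + 1), K i.castSucc (T i)
    have hSconv : Convex ℝ S := convex_iInter fun i => hconv i.castSucc (T i)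
    have hScomp : IsCompact S := (hcomp _ (T 0)).of_isClosed_subset
      (isClosed_iInter fun i => (hcomp i.castSucc (T i)).isClosed) (Set.iInter_subset _ 0)
    obtain ⟨p, hpS, hpmin⟩ :=
      hScomp.exists_isMinOn (hinter_init T) continuous_norm.continuousOn
    obtain ⟨a, ha⟩ := hfar p (Fin.last (n + 1))
    refine ⟨Fin.snoc T a, fun c hc => ?_⟩
    obtain ⟨hca, hcS⟩ : c ∈ K (Fin.last (n + 1)) a ∧ c ∈ S := by
      simpa [S, Fin.forall_fin_succ', and_comm] using hc
    have hcp : R < ‖c - p‖ := by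
      rw [← dist_eq_norm_sub']
      exact ha.trans_le (Metric.infDist_le_dist_of_mem hca)
    refine lt_norm_mul_of_isMinOn hSconv hpS hpmin hcS (hr.1 _ le_add_self).1.le ?_ hcp
    rw [hr.2.2 (n + 1) le_add_self]
    exact hT p hpS

lemma exists_infDist_le_of_isCompact {r : ℕ → ℝ} (hr : IsHellySeq X r) {k : ℕ} (hk : 1 ≤ k)
    {ι : Fin k → Type*} (K : ∀ i, ι i → Set X) (hconv : ∀ i a, Convex ℝ (K i a))
    (hcomp : ∀ i a, IsCompact (K i a))
    (hrainbow : ∀ T : ∀ i, ι i, ∃ p ∈ Metric.closedBall (0 : X) 1, ∀ i, p ∈ K i (T i)) :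
    ∃ x i, ∀ a, Metric.infDist x (K i a) ≤ r k := by
  by_contra! hfar
  obtain ⟨n, rfl⟩ := Nat.exists_eq_add_of_le' hk
  have hinter (T : ∀ i, ι i) : (⋂ i, K i (T i)).Nonempty :=
    (hrainbow T).imp fun p hp => Set.mem_iInter.2 hp.2
  obtain ⟨T, hT⟩ := exists_rainbow_forall_lt_norm_mul hr K hconv hcomp hinter hfar
  obtain ⟨p, hp_ball, hpT⟩ := hrainbow T
  refine (hT p (Set.mem_iInter.2 hpT)).not_ge ?_
  exact mul_le_of_le_one_left (hr.1 _ hk).1.le (mem_closedBall_zero_iff.1 hp_ball)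

variable {I : Type*} {ι : I → Type*}

/-- Given a point `P T` for every rainbow choice `T`, the convex hull of the points belonging to
the choices whose `i`-th entry is `a`. It is a compact substitute for the set indexed by `a` in
the `i`-th family, with the same rainbow intersection points. -/
def rainbowHull (P : (∀ i, ι i) → X) (i : I) (a : ι i) : Set X :=
  convexHull ℝ (P '' {T | T i = a})

lemma convex_rainbowHull (P : (∀ i, ι i) → X) (i : I) (a : ι i) : Convex ℝ (rainbowHull P i a) :=
  convex_convexHull ℝ _

lemma isCompact_rainbowHull [Finite I] [∀ i, Finite (ι i)] (P : (∀ i, ι i) → X) (i : I)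
    (a : ι i) : IsCompact (rainbowHull P i a) :=
  (Set.toFinite _).isCompact_convexHull ℝ

lemma mem_rainbowHull (P : (∀ i, ι i) → X) (T : ∀ i, ι i) (i : I) : P T ∈ rainbowHull P i (T i) :=
  subset_convexHull ℝ _ ⟨T, rfl, rfl⟩

lemma rainbowHull_nonempty [∀ i, Nonempty (ι i)] (P : (∀ i, ι i) → X) (i : I) (a : ι i) :
    (rainbowHull P i a).Nonempty := by
  obtain ⟨T, rfl⟩ := Function.surjective_eval i a
  exact ⟨P T, mem_rainbowHull P T i⟩

lemma rainbowHull_subset {P : (∀ i, ι i) → X} {i : I} {a : ι i} {K : Set X} (hK : Convex ℝ K)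
    (hP : ∀ T, T i = a → P T ∈ K) : rainbowHull P i a ⊆ K :=
  convexHull_min (Set.image_subset_iff.2 hP) hK

end RainbowIntersections

theorem no_dim_colorful_helly_general {X : Type*} [NormedAddCommGroup X] [NormedSpace ℝ X]
    {r : ℕ → ℝ} (hr : IsHellySeq X r) {k : ℕ} (hk : 1 ≤ k) {ι : Fin k → Type*}
    [∀ i, Finite (ι i)] (K : ∀ i, ι i → Set X) (hconv : ∀ i a, Convex ℝ (K i a))
    (hrainbow : ∀ T : ∀ i, ι i, ∃ p ∈ Metric.closedBall (0 : X) 1, ∀ i, p ∈ K i (T i)) :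
    ∃ x i, ∀ a, Metric.infDist x (K i a) ≤ r k := by
  by_cases hι : ∃ i, IsEmpty (ι i)
  · obtain ⟨i, hi⟩ := hι
    exact ⟨0, i, hi.elim⟩
  simp only [not_exists, not_isEmpty_iff] at hι
  choose P hP_ball hPK using hrainbow
  obtain ⟨x, i, hx⟩ := exists_infDist_le_of_isCompact hr hk (rainbowHull P) (convex_rainbowHull P)
    (isCompact_rainbowHull P) fun T => ⟨P T, hP_ball T, mem_rainbowHull P T⟩
  refine ⟨x, i, fun a => le_trans ?_ (hx a)⟩
  have hsubset : rainbowHull P i a ⊆ K i a :=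
    rainbowHull_subset (hconv i a) fun T hT => hT ▸ hPK T i
  exact Metric.infDist_le_infDist_of_subset hsubset (rainbowHull_nonempty P i a)

/-- **No-dimensional colorful Helly theorem in uniformly convex Banach spaces.** -/
theorem no_dim_colorful_helly
    {X : Type*} [NormedAddCommGroup X] [NormedSpace ℝ X] [CompleteSpace X]
    (hX : UnifConvex X) {r : ℕ → ℝ} (hr : IsHellySeq X r)
    {k : ℕ} (hk1 : 1 ≤ k)
    (F : Fin k → Finset (Set X)) (hne : ∀ i, (F i).Nonempty)
    (hconv : ∀ i, ∀ K ∈ F i, Convex ℝ K)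
    (hrainbow : ∀ T : Fin k → Set X, (∀ i, T i ∈ F i) →
      ∃ p ∈ Metric.closedBall (0 : X) 1, ∀ i : Fin k, p ∈ T i) :
    ∃ x : X, ∃ i : Fin k, ∀ K ∈ F i, Metric.infDist x K ≤ r k := by
  obtain ⟨x, i, hx⟩ := no_dim_colorful_helly_general hr hk1 (fun i (K : F i) => K.1)
    (fun i K => hconv i K K.2) fun T => hrainbow (fun i => T i) fun i => (T i).2
  exact ⟨x, i, fun K hK => hx ⟨K, hK⟩⟩
end

section
/- Let X be a real normed space (of dimension at least 2, so that quasi-orthogonal unit vectors exist). For every r ∈ (0,1] there exists a unique t ∈ (0,1] such that t·ζ_X(t) = r. Consequently, the recursively defined sequence r_1 = 1, r_{j+1} = the unique solution in (0,1] of t·ζ_X(t) = r_j, is well-defined. -/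
open scoped Classical

/-!
A functional attaining its norm at `x` and vanishing at `y` shows `‖x‖ ≤ ‖x + t • y‖` for every
real `t`, so the convex function `t ↦ ‖x + t • y‖` has its minimum at `0` and is monotone on
`[0, ∞)`. Passing to the infimum over unit vectors, `ζ_X` is at least `1`, nondecreasing on
`[0, ∞)` and `1`-Lipschitz. Hence `t ↦ t * ζ_X(t)` is continuous and strictly increasing from `0`,
and it dominates `t`, so it takes each value `r ≥ 0` exactly once on `[0, ∞)`, at some `t ≤ r`.
-/

open Set

section QuasiOrth

variable {X : Type*} [NormedAddCommGroup X] [NormedSpace ℝ X]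

lemma exists_norm_eq_one_quasiOrth (hdim : 2 ≤ Module.rank ℝ X) (x : X) :
    ∃ y : X, ‖y‖ = 1 ∧ QuasiOrth y x := by
  have one_lt_rank : 1 < Module.rank ℝ X := Cardinal.one_lt_two.trans_le hdim
  have : Nontrivial X := rank_pos_iff_nontrivial.mp (zero_lt_one.trans one_lt_rank)
  obtain ⟨f, hf, hfx⟩ := exists_dual_vector' ℝ x
  have not_injective : ¬ Function.Injective f := fun hinj ↦ by
    have rank_le := LinearMap.lift_rank_le_of_injective (f : X →ₗ[ℝ] ℝ) hinj
    rw [Module.rank_self, Cardinal.lift_one, Cardinal.lift_le_one_iff] at rank_le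
    exact one_lt_rank.not_ge rank_le
  obtain ⟨z, hfz, hz⟩ : ∃ z, f z = 0 ∧ z ≠ 0 := by
    simpa [injective_iff_map_eq_zero] using not_injective
  refine ⟨NormedSpace.normalize z, NormedSpace.norm_normalize hz, f, ?_, ?_, ?_⟩
  · exact norm_ne_zero_iff.mp (hf ▸ one_ne_zero)
  · simpa [hf] using hfx
  · simp [NormedSpace.normalize, hfz]

namespace QuasiOrth

variable {x y : X}

lemma norm_le_norm_add_smul_s12 (h : QuasiOrth y x) (t : ℝ) : ‖x‖ ≤ ‖x + t • y‖ := by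
  obtain ⟨f, hf, hfx, hfy⟩ := h
  refine le_of_mul_le_mul_left ?_ (norm_pos_iff.mpr hf)
  calc ‖f‖ * ‖x‖ = f (x + t • y) := by simp [hfx, hfy]
    _ ≤ ‖f (x + t • y)‖ := Real.le_norm_self _
    _ ≤ ‖f‖ * ‖x + t • y‖ := f.le_opNorm _

lemma monotoneOn_norm_add_smul_s12 (h : QuasiOrth y x) :
    MonotoneOn (fun t : ℝ ↦ ‖x + t • y‖) (Ici 0) := by
  intro s hs t _ hst
  have convex : ConvexOn ℝ univ (fun t : ℝ ↦ ‖x + t • y‖) := by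
    simpa [Function.comp_def, AffineMap.lineMap_apply, add_comm] using
      convexOn_univ_norm.comp_affineMap (AffineMap.lineMap x (x + y) : ℝ →ᵃ[ℝ] X)
  calc ‖x + s • y‖ ≤ max ‖x + (0 : ℝ) • y‖ ‖x + t • y‖ :=
        convex.le_max_of_mem_Icc (mem_univ _) (mem_univ _) ⟨hs, hst⟩
    _ = ‖x + t • y‖ := max_eq_right <| by simpa using h.norm_le_norm_add_smul_s12 t

end QuasiOrth

end QuasiOrth

section zetaConv

variable {X : Type*} [NormedAddCommGroup X] [NormedSpace ℝ X]

lemma zetaConv_le_norm_add_smul {x y : X} (hx : ‖x‖ = 1) (hy : ‖y‖ = 1) (h : QuasiOrth y x)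
    (t : ℝ) : zetaConv X t ≤ ‖x + t • y‖ := by
  refine csInf_le ⟨0, ?_⟩ ⟨x, y, hx, hy, h, rfl⟩
  rintro _ ⟨x, y, -, -, -, rfl⟩
  exact norm_nonneg _

lemma le_zetaConv (hdim : 2 ≤ Module.rank ℝ X) {c t : ℝ}
    (hc : ∀ x y : X, ‖x‖ = 1 → ‖y‖ = 1 → QuasiOrth y x → c ≤ ‖x + t • y‖) :
    c ≤ zetaConv X t := by
  obtain ⟨x, hx, -⟩ := exists_norm_eq_one_quasiOrth hdim 0
  obtain ⟨y, hy, hyx⟩ := exists_norm_eq_one_quasiOrth hdim x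
  refine le_csInf ⟨_, x, y, hx, hy, hyx, rfl⟩ ?_
  rintro _ ⟨x, y, hx, hy, hyx, rfl⟩
  exact hc x y hx hy hyx

lemma one_le_zetaConv (hdim : 2 ≤ Module.rank ℝ X) (t : ℝ) : 1 ≤ zetaConv X t :=
  le_zetaConv hdim fun _ _ hx _ h ↦ hx ▸ h.norm_le_norm_add_smul_s12 t

lemma monotoneOn_zetaConv (hdim : 2 ≤ Module.rank ℝ X) : MonotoneOn (zetaConv X) (Ici 0) :=
  fun s hs _ ht hst ↦ le_zetaConv hdim fun _ _ hx hy h ↦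
    (zetaConv_le_norm_add_smul hx hy h s).trans (h.monotoneOn_norm_add_smul_s12 hs ht hst)

lemma lipschitzWith_zetaConv (hdim : 2 ≤ Module.rank ℝ X) : LipschitzWith 1 (zetaConv X) := by
  refine LipschitzWith.of_le_add fun s t ↦ sub_le_iff_le_add.mp <|
    le_zetaConv hdim fun x y hx hy h ↦ sub_le_iff_le_add.mpr ?_
  calc zetaConv X s ≤ ‖x + s • y‖ := zetaConv_le_norm_add_smul hx hy h s
    _ = ‖(x + t • y) + (s - t) • y‖ := by congr 1; module
    _ ≤ ‖x + t • y‖ + ‖(s - t) • y‖ := norm_add_le _ _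
    _ = ‖x + t • y‖ + dist s t := by rw [norm_smul, hy, mul_one, dist_eq_norm]

lemma strictMonoOn_mul_zetaConv (hdim : 2 ≤ Module.rank ℝ X) :
    StrictMonoOn (fun t ↦ t * zetaConv X t) (Ici 0) := fun s hs _ ht hst ↦
  mul_lt_mul hst (monotoneOn_zetaConv hdim hs ht hst.le)
    (zero_lt_one.trans_le (one_le_zetaConv hdim s)) ht

lemma exists_mem_Icc_mul_zetaConv_eq (hdim : 2 ≤ Module.rank ℝ X) {r : ℝ} (hr : 0 ≤ r) :
    ∃ t ∈ Icc 0 r, t * zetaConv X t = r := by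
  have continuous : Continuous fun t ↦ t * zetaConv X t :=
    continuous_id.mul (lipschitzWith_zetaConv hdim).continuous
  refine intermediate_value_Icc hr continuous.continuousOn ⟨?_, ?_⟩
  · simpa using hr
  · exact le_mul_of_one_le_right hr (one_le_zetaConv hdim r)

lemma existsUnique_mem_Ioc_mul_zetaConv_eq (hdim : 2 ≤ Module.rank ℝ X) {r R : ℝ}
    (hr : r ∈ Ioc 0 R) : ∃! t, t ∈ Ioc 0 R ∧ t * zetaConv X t = r := by
  obtain ⟨t, ht, htr⟩ := exists_mem_Icc_mul_zetaConv_eq hdim hr.1.le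
  have t_ne_zero : t ≠ 0 := fun h ↦ hr.1.ne (by simpa [h] using htr)
  refine ⟨t, ⟨⟨ht.1.lt_of_ne' t_ne_zero, ht.2.trans hr.2⟩, htr⟩, ?_⟩
  rintro s ⟨hs, hsr⟩
  exact (strictMonoOn_mul_zetaConv hdim).injOn hs.1.le ht.1 (hsr.trans htr.symm)

end zetaConv

lemma exists_seq_mem_rel_of_forall_exists {α : Type*} {s : Set α} {rel : α → α → Prop}
    (h : ∀ a ∈ s, ∃ b ∈ s, rel b a) {a : α} (ha : a ∈ s) :
    ∃ u : ℕ → α, u 0 = a ∧ ∀ n, u (n + 1) ∈ s ∧ rel (u (n + 1)) (u n) := by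
  have exists_next (b : s) : ∃ c : s, rel c b := by simpa using h b b.2
  choose next next_rel using exists_next
  refine ⟨fun n ↦ (next^[n] ⟨a, ha⟩).1, rfl, fun n ↦ ⟨Subtype.coe_prop _, ?_⟩⟩
  simpa only [Function.iterate_succ_apply'] using next_rel (next^[n] ⟨a, ha⟩)

theorem helly_sequence_well_defined_general
    {X : Type*} [NormedAddCommGroup X] [NormedSpace ℝ X]
    (hdim : 2 ≤ Module.rank ℝ X) {R : ℝ} (hR : 0 < R) :
    (∀ r ∈ Ioc 0 R, ∃! t : ℝ, t ∈ Ioc 0 R ∧ t * zetaConv X t = r) ∧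
    ∃ rs : ℕ → ℝ, rs 1 = R ∧ ∀ j : ℕ, 1 ≤ j →
      rs (j + 1) ∈ Ioc 0 R ∧ rs (j + 1) * zetaConv X (rs (j + 1)) = rs j := by
  have unique_solution (r : ℝ) (hr : r ∈ Ioc 0 R) := existsUnique_mem_Ioc_mul_zetaConv_eq hdim hr
  obtain ⟨u, u_zero, u_succ⟩ := exists_seq_mem_rel_of_forall_exists
    (fun r hr ↦ (unique_solution r hr).exists) (right_mem_Ioc.mpr hR)
  refine ⟨unique_solution, fun j ↦ u (j - 1), u_zero, fun j hj ↦ ?_⟩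
  obtain ⟨k, rfl⟩ := Nat.exists_eq_add_of_le' hj
  exact u_succ k

/-- **Well-definedness of the Helly sequence.** In a normed space of dimension at
least two, for every `r ∈ (0,1]` the equation `t · ζ_X(t) = r` has a unique solution
`t ∈ (0,1]`; consequently the recursively defined sequence `r₁ = 1`,
`r_{j+1} ζ_X(r_{j+1}) = r_j` is well-defined. -/
theorem helly_sequence_well_defined
    {X : Type*} [NormedAddCommGroup X] [NormedSpace ℝ X]
    (hdim : 2 ≤ Module.rank ℝ X) :
    (∀ r ∈ Set.Ioc (0 : ℝ) 1,
      ∃! t : ℝ, t ∈ Set.Ioc (0 : ℝ) 1 ∧ t * zetaConv X t = r) ∧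
    ∃ rs : ℕ → ℝ, rs 1 = 1 ∧ ∀ j : ℕ, 1 ≤ j →
      rs (j + 1) ∈ Set.Ioc (0 : ℝ) 1 ∧
      rs (j + 1) * zetaConv X (rs (j + 1)) = rs j :=
  helly_sequence_well_defined_general hdim one_pos
end
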